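/- Let f : 𝔹 → 𝔹 be regular (f(q) = ∑_{n≥0} qⁿaₙ converging on 𝔹, with f(𝔹) ⊆ 𝔹) and suppose f is a bijection of 𝔹 onto 𝔹 with f(0) = 0. Then there exists u ∈ ℍ with |u| = 1 such that f(q) = qu for all q ∈ 𝔹. -/

import Mathlib

open Quaternion

/-! Left multiplication turns `ℍ` into a complex vector space on which right multiplications act
linearly, so a regular `f` with coefficients `aₙ` has a holomorphic family of operators
`T z v = ∑ zⁿ v aₙ`. For `v ≠ 0` we have `T z v = v f(v⁻¹ z v)`, and every quaternion has the form
`v⁻¹ z v`; the maximum principle for `T z v` and for `(T z)⁻¹` therefore becomes a maximum and a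
minimum modulus principle for `f`.

The minimum principle applied to `f - w` shows that an injective regular function has a continuous
inverse, so a regular bijection `f` of the ball is proper. Write `f q = qᵐ g q` with `g 0 ≠ 0`. If
`f` vanishes only at `0`, then `g` has no zeros, and since `‖f‖ → 1` at the boundary both principles
apply and give `‖g‖ = 1`. So `g` is a constant `u`, and injectivity of `qᵐ u` forces `m = 1`. -/

open Metric Set Filter Topology

section OperatorMinimumPrinciple

theorem isUnit_of_injective_of_finiteDimensional {𝕜 F : Type*} [NontriviallyNormedField 𝕜]
    [CompleteSpace 𝕜] [NormedAddCommGroup F] [NormedSpace 𝕜 F] [FiniteDimensional 𝕜 F]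
    {A : F →L[𝕜] F} (hA : Function.Injective A) : IsUnit A :=
  have := FiniteDimensional.complete 𝕜 F
  ContinuousLinearMap.isUnit_iff_bijective.2
    ⟨hA, (LinearMap.injective_iff_surjective (f := (A : F →ₗ[𝕜] F))).1 hA⟩

theorem diffContOnCl_ringInverse {𝕜 E R : Type*} [NontriviallyNormedField 𝕜]
    [NormedAddCommGroup E] [NormedSpace 𝕜 E] [NormedRing R] [NormedAlgebra 𝕜 R]
    [HasSummableGeomSeries R] {T : E → R} {U : Set E} (hT : DiffContOnCl 𝕜 T U)
    (hunit : ∀ z ∈ closure U, IsUnit (T z)) : DiffContOnCl 𝕜 (fun z ↦ Ring.inverse (T z)) U where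
  differentiableOn := hT.differentiableOn.inverse fun z hz ↦ hunit z (subset_closure hz)
  continuousOn z hz := by
    obtain ⟨u, hu⟩ := hunit z hz
    exact (hu ▸ NormedRing.inverse_continuousAt u).comp_continuousWithinAt (hT.continuousOn z hz)

theorem mul_norm_le_norm_apply_of_forall_mem_frontier {E F : Type*} [NormedAddCommGroup E]
    [NormedSpace ℂ E] [Nontrivial E] [NormedAddCommGroup F] [NormedSpace ℂ F]
    [FiniteDimensional ℂ F] {T : E → F →L[ℂ] F} {U : Set E} (hU : Bornology.IsBounded U)
    (hT : DiffContOnCl ℂ T U)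
    (hinj : ∀ z ∈ closure U, Function.Injective (T z)) {m : ℝ}
    (hm : ∀ z ∈ frontier U, ∀ v, m * ‖v‖ ≤ ‖T z v‖) {z : E} (hz : z ∈ closure U) (v : F) :
    m * ‖v‖ ≤ ‖T z v‖ := by
  obtain hm0 | hm0 := le_or_gt m 0
  · exact (mul_nonpos_of_nonpos_of_nonneg hm0 (norm_nonneg v)).trans (norm_nonneg _)
  have := FiniteDimensional.complete ℂ F
  have hunit : ∀ z ∈ closure U, IsUnit (T z) := fun z hz ↦
    isUnit_of_injective_of_finiteDimensional (hinj z hz)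
  have hfrontier : ∀ z ∈ frontier U, ‖Ring.inverse (T z)‖ ≤ m⁻¹ := fun z hz ↦ by
    refine ContinuousLinearMap.opNorm_le_bound _ (by positivity) fun w ↦ ?_
    have hw : T z (Ring.inverse (T z) w) = w :=
      congr($(Ring.mul_inverse_cancel _ (hunit z (frontier_subset_closure hz))) w)
    rw [inv_mul_eq_div, le_div_iff₀' hm0]
    exact (hm z hz _).trans_eq (congrArg norm hw)
  have hle := ContinuousLinearMap.le_of_opNorm_le _
    (Complex.norm_le_of_forall_mem_frontier_norm_le hU (diffContOnCl_ringInverse hT hunit)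
      hfrontier hz) (T z v)
  have hv : Ring.inverse (T z) (T z v) = v := congr($(Ring.inverse_mul_cancel _ (hunit z hz)) v)
  rwa [hv, inv_mul_eq_div, le_div_iff₀' hm0] at hle

end OperatorMinimumPrinciple

section Conjugation

theorem norm_coeComplex (z : ℂ) : ‖(z : ℍ[ℝ])‖ = ‖z‖ := by
  rw [← sq_eq_sq₀ (norm_nonneg _) (norm_nonneg _), sq, ← Quaternion.normSq_eq_norm_mul_self,
    Quaternion.normSq_def', Complex.sq_norm, Complex.normSq_apply]
  simp [sq]

theorem norm_inv_mul_coeComplex_mul (z : ℂ) {v : ℍ[ℝ]} (hv : v ≠ 0) : ‖v⁻¹ * z * v‖ = ‖z‖ := by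
  rw [norm_mul, norm_mul, norm_inv, norm_coeComplex, mul_right_comm,
    inv_mul_cancel₀ (norm_ne_zero_iff.2 hv), one_mul]

theorem exists_inv_mul_coeComplex_mul_eq (q : ℍ[ℝ]) :
    ∃ (z : ℂ) (v : ℍ[ℝ]), v ≠ 0 ∧ v⁻¹ * z * v = q := by
  by_cases hq : q.imJ = 0 ∧ q.imK = 0
  · exact ⟨⟨q.re, q.imI⟩, 1, one_ne_zero, by ext <;> simp [hq]⟩
  · set y := √(q.imI ^ 2 + q.imJ ^ 2 + q.imK ^ 2)
    have hy : y ^ 2 = q.imI ^ 2 + q.imJ ^ 2 + q.imK ^ 2 := Real.sq_sqrt (by positivity)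
    -- `v = y - i (Im q)` satisfies `(i y) v = v (Im q)` because `(Im q)² = -y²`.
    obtain ⟨v, hre, hi, hj, hk⟩ : ∃ v : ℍ[ℝ],
        v.re = y + q.imI ∧ v.imI = 0 ∧ v.imJ = q.imK ∧ v.imK = -q.imJ :=
      ⟨⟨y + q.imI, 0, q.imK, -q.imJ⟩, rfl, rfl, rfl, rfl⟩
    have hv : v ≠ 0 := by
      rintro rfl
      exact hq ⟨neg_eq_zero.1 hk.symm, hj.symm⟩
    have hcomm : ((⟨q.re, y⟩ : ℂ) : ℍ[ℝ]) * v = v * q := by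
      ext <;> simp [hre, hi, hj, hk] <;> linarith
    exact ⟨⟨q.re, y⟩, v, hv, by rw [mul_assoc, hcomm, inv_mul_cancel_left₀ hv]⟩

end Conjugation

/-- A regular function on the unit ball of `ℍ`: the sum of a convergent power series with
coefficients on the right. Values outside the ball are irrelevant. -/
def IsRegularOnBall (f : ℍ[ℝ] → ℍ[ℝ]) : Prop :=
  ∃ a : ℕ → ℍ[ℝ], ∀ q ∈ ball (0 : ℍ[ℝ]) 1, HasSum (fun n ↦ q ^ n * a n) (f q)

theorem summable_pow_mul_norm_of_hasSum {f : ℍ[ℝ] → ℍ[ℝ]} {a : ℕ → ℍ[ℝ]}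
    (hf : ∀ q ∈ ball (0 : ℍ[ℝ]) 1, HasSum (fun n ↦ q ^ n * a n) (f q)) {r : ℝ}
    (hr0 : 0 ≤ r) (hr1 : r < 1) : Summable fun n ↦ r ^ n * ‖a n‖ := by
  have hr : (r : ℍ[ℝ]) ∈ ball (0 : ℍ[ℝ]) 1 := by simpa [abs_of_nonneg hr0]
  simpa [abs_of_nonneg hr0] using (hf r hr).summable.norm

namespace IsRegularOnBall

variable {f : ℍ[ℝ] → ℍ[ℝ]}

theorem sub_const (hf : IsRegularOnBall f) (w : ℍ[ℝ]) : IsRegularOnBall fun q ↦ f q - w := by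
  obtain ⟨a, ha⟩ := hf
  refine ⟨a - Pi.single 0 w, fun q hq ↦ ?_⟩
  have hw : HasSum (fun n ↦ q ^ n * (Pi.single 0 w : ℕ → ℍ[ℝ]) n) w := by
    simpa using hasSum_single (f := fun n ↦ q ^ n * (Pi.single 0 w : ℕ → ℍ[ℝ]) n) 0
      fun n hn ↦ by simp [hn]
  simpa only [Pi.sub_apply, mul_sub] using (ha q hq).sub hw

theorem continuousOn (hf : IsRegularOnBall f) : ContinuousOn f (ball 0 1) := by
  obtain ⟨a, ha⟩ := hf
  intro q hq
  obtain ⟨r, hqr, hr1⟩ := exists_between (mem_ball_zero_iff.1 hq)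
  have hsum : ContinuousOn (fun p ↦ ∑' n, p ^ n * a n) (ball 0 r) := by
    refine continuousOn_tsum (fun n ↦ by fun_prop)
      (summable_pow_mul_norm_of_hasSum ha ((norm_nonneg q).trans hqr.le) hr1) fun n p hp ↦ ?_
    rw [norm_mul, norm_pow]
    gcongr
    exact (mem_ball_zero_iff.1 hp).le
  have hfr : ContinuousOn f (ball 0 r) :=
    hsum.congr fun p hp ↦ (ha p (ball_subset_ball hr1.le hp)).tsum_eq.symm
  exact (hfr.continuousAt (isOpen_ball.mem_nhds (mem_ball_zero_iff.2 hqr))).continuousWithinAt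

end IsRegularOnBall

section LeftComplexStructure

/-- The complex normed space structure on `ℍ` in which `ℂ ⊆ ℍ` acts by left multiplication, chosen
so that right multiplications by quaternions are `ℂ`-linear. -/
noncomputable abbrev leftComplexNormedSpace : NormedSpace ℂ ℍ[ℝ] where
  toModule := Module.compHom ℍ[ℝ] (Quaternion.ofComplex : ℂ →+* ℍ[ℝ])
  norm_smul_le z v := by
    change ‖(z : ℍ[ℝ]) * v‖ ≤ _
    rw [norm_mul, norm_coeComplex]

attribute [local instance] leftComplexNormedSpace

theorem complex_smul_eq_coeComplex_mul (z : ℂ) (v : ℍ[ℝ]) : z • v = (z : ℍ[ℝ]) * v := rfl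

theorem isScalarTower_complex_quaternion : IsScalarTower ℂ ℍ[ℝ] ℍ[ℝ] :=
  ⟨fun _ _ _ ↦ mul_assoc _ _ _⟩

theorem finiteDimensional_complex_quaternion : FiniteDimensional ℂ ℍ[ℝ] :=
  Module.Finite.of_restrictScalars_finite ℝ ℂ ℍ[ℝ]

attribute [local instance] isScalarTower_complex_quaternion finiteDimensional_complex_quaternion

theorem strictConvexSpace_complexToReal :
    @StrictConvexSpace ℝ ℍ[ℝ] _ _ _ NormedSpace.complexToReal := by
  have hinst : NormedSpace.complexToReal =
      (NormedAlgebra.toNormedSpace ℍ[ℝ] : NormedSpace ℝ ℍ[ℝ]) := by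
    ext r q : 3
    exact algebraMap_smul ℂ r q
  rw [hinst]
  infer_instance

/-- Right multiplication by `b`, as an operator for the left complex structure. -/
noncomputable def rightMul (b : ℍ[ℝ]) : ℍ[ℝ] →L[ℂ] ℍ[ℝ] :=
  (LinearMap.mulRight ℂ b).mkContinuous ‖b‖ fun v ↦ ((norm_mul v b).trans (mul_comm _ _)).le

theorem rightMul_apply (b v : ℍ[ℝ]) : rightMul b v = v * b := rfl

theorem norm_rightMul_le (b : ℍ[ℝ]) : ‖rightMul b‖ ≤ ‖b‖ :=
  LinearMap.mkContinuous_norm_le _ (norm_nonneg b) _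

namespace IsRegularOnBall

variable {f : ℍ[ℝ] → ℍ[ℝ]}

theorem exists_slice (hf : IsRegularOnBall f) :
    ∃ T : ℂ → ℍ[ℝ] →L[ℂ] ℍ[ℝ], DifferentiableOn ℂ T (ball 0 1) ∧
      ∀ z, ‖z‖ < 1 → ∀ v ≠ 0, T z v = v * f (v⁻¹ * z * v) := by
  obtain ⟨a, ha⟩ := hf
  have hbound {r : ℝ} (n : ℕ) {z : ℂ} (hz : ‖z‖ ≤ r) :
      ‖z ^ n • rightMul (a n)‖ ≤ r ^ n * ‖a n‖ := by
    rw [norm_smul, norm_pow]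
    have := (norm_nonneg z).trans hz
    gcongr
    exact norm_rightMul_le _
  refine ⟨fun z ↦ ∑' n, z ^ n • rightMul (a n), fun z hz ↦ ?_, fun z hz v hv ↦ ?_⟩
  · obtain ⟨r, hzr, hr1⟩ := exists_between (mem_ball_zero_iff.1 hz)
    have hdiff := Complex.differentiableOn_tsum_of_summable_norm
      (summable_pow_mul_norm_of_hasSum ha ((norm_nonneg z).trans hzr.le) hr1)
      (F := fun n z ↦ z ^ n • rightMul (a n)) (fun n ↦ by fun_prop) isOpen_ball
      fun n w hw ↦ hbound n (mem_ball_zero_iff.1 hw).le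
    exact (hdiff.differentiableAt
      (isOpen_ball.mem_nhds (mem_ball_zero_iff.2 hzr))).differentiableWithinAt
  · have hsum : Summable fun n ↦ z ^ n • rightMul (a n) :=
      .of_norm_bounded (summable_pow_mul_norm_of_hasSum ha (norm_nonneg z) hz)
        fun n ↦ hbound n le_rfl
    have hT := hsum.hasSum.mapL (ContinuousLinearMap.apply ℂ ℍ[ℝ] v)
    have hq : v⁻¹ * z * v ∈ ball (0 : ℍ[ℝ]) 1 := by
      rwa [mem_ball_zero_iff, norm_inv_mul_coeComplex_mul z hv]
    have hterm (n : ℕ) : (z ^ n • rightMul (a n)) v = v * ((v⁻¹ * z * v) ^ n * a n) := by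
      have hpow : ((z ^ n : ℂ) : ℍ[ℝ]) = (z : ℍ[ℝ]) ^ n := map_pow Quaternion.ofComplex z n
      rw [GroupWithZero.conj_pow₀ hv, smul_apply, rightMul_apply, complex_smul_eq_coeComplex_mul,
        hpow]
      simp only [mul_assoc, mul_inv_cancel_left₀ hv]
    simp only [ContinuousLinearMap.apply_apply, hterm] at hT
    exact hT.unique ((ha _ hq).mul_left v)

theorem norm_le_of_forall_norm_eq (hf : IsRegularOnBall f) {r C : ℝ} (hr1 : r < 1)
    (hle : ∀ q, ‖q‖ = r → ‖f q‖ ≤ C) {q : ℍ[ℝ]} (hq : ‖q‖ ≤ r) : ‖f q‖ ≤ C := by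
  obtain rfl | hr0 := eq_or_ne r 0
  · exact hle q (hq.antisymm (norm_nonneg q))
  obtain ⟨T, hTd, hT⟩ := hf.exists_slice
  obtain ⟨z, v, hv, rfl⟩ := exists_inv_mul_coeComplex_mul_eq q
  rw [norm_inv_mul_coeComplex_mul z hv] at hq
  have hTv : DiffContOnCl ℂ (fun w ↦ T w v) (ball 0 r) :=
    ((hTd.mono (closedBall_subset_ball hr1)).clm_apply
      (differentiableOn_const v)).diffContOnCl_ball subset_rfl
  have hfrontier : ∀ w ∈ frontier (ball (0 : ℂ) r), ‖T w v‖ ≤ ‖v‖ * C := by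
    rw [frontier_ball 0 hr0]
    intro w hw
    rw [mem_sphere_zero_iff_norm] at hw
    rw [hT w (hw.trans_lt hr1) v hv, norm_mul]
    gcongr
    exact hle _ ((norm_inv_mul_coeComplex_mul w hv).trans hw)
  have hmax := Complex.norm_le_of_forall_mem_frontier_norm_le isBounded_ball hTv hfrontier
    (closure_ball (0 : ℂ) hr0 ▸ mem_closedBall_zero_iff.2 hq)
  rw [hT z (hq.trans_lt hr1) v hv, norm_mul] at hmax
  exact le_of_mul_le_mul_left hmax (norm_pos_iff.2 hv)

theorem le_norm_of_forall_norm_eq (hf : IsRegularOnBall f) {r m : ℝ} (hr1 : r < 1)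
    (hne : ∀ q, ‖q‖ ≤ r → f q ≠ 0) (hle : ∀ q, ‖q‖ = r → m ≤ ‖f q‖) {q : ℍ[ℝ]} (hq : ‖q‖ ≤ r) :
    m ≤ ‖f q‖ := by
  obtain rfl | hr0 := eq_or_ne r 0
  · exact hle q (hq.antisymm (norm_nonneg q))
  obtain ⟨T, hTd, hT⟩ := hf.exists_slice
  obtain ⟨z, v, hv, rfl⟩ := exists_inv_mul_coeComplex_mul_eq q
  rw [norm_inv_mul_coeComplex_mul z hv] at hq
  have hinj : ∀ w ∈ closure (ball (0 : ℂ) r), Function.Injective (T w) := by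
    rw [closure_ball 0 hr0]
    refine fun w hw ↦ (injective_iff_map_eq_zero _).2 fun x hx ↦ by_contra fun hx0 ↦ ?_
    rw [mem_closedBall_zero_iff] at hw
    rw [hT w (hw.trans_lt hr1) x hx0, mul_eq_zero, or_iff_right hx0] at hx
    exact hne _ ((norm_inv_mul_coeComplex_mul w hx0).trans_le hw) hx
  have hfrontier : ∀ w ∈ frontier (ball (0 : ℂ) r), ∀ x, m * ‖x‖ ≤ ‖T w x‖ := by
    rw [frontier_ball 0 hr0]
    intro w hw x
    obtain rfl | hx := eq_or_ne x 0
    · simp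
    rw [mem_sphere_zero_iff_norm] at hw
    rw [hT w (hw.trans_lt hr1) x hx, norm_mul, mul_comm m]
    gcongr
    exact hle _ ((norm_inv_mul_coeComplex_mul w hx).trans hw)
  have hmin := mul_norm_le_norm_apply_of_forall_mem_frontier isBounded_ball
    ((hTd.mono (closedBall_subset_ball hr1)).diffContOnCl_ball subset_rfl) hinj hfrontier
    (closure_ball (0 : ℂ) hr0 ▸ mem_closedBall_zero_iff.2 hq) v
  rw [hT z (hq.trans_lt hr1) v hv, norm_mul, mul_comm] at hmin
  exact le_of_mul_le_mul_left hmin (norm_pos_iff.2 hv)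

theorem apply_conj_eq_of_isMaxOn (hf : IsRegularOnBall f) {v : ℍ[ℝ]} (hv : v ≠ 0) {w z : ℂ}
    (hw : ‖w‖ < 1) (hz : ‖z‖ < 1) (hmax : IsMaxOn (norm ∘ f) (ball 0 1) (v⁻¹ * w * v)) :
    f (v⁻¹ * z * v) = f (v⁻¹ * w * v) := by
  obtain ⟨T, hTd, hT⟩ := hf.exists_slice
  have hTmax : IsMaxOn (norm ∘ fun y ↦ T y v) (ball 0 1) w := fun y hy ↦ by
    rw [mem_ball_zero_iff] at hy
    have hle : ‖f (v⁻¹ * y * v)‖ ≤ ‖f (v⁻¹ * w * v)‖ := hmax <| by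
      rwa [mem_ball_zero_iff, norm_inv_mul_coeComplex_mul y hv]
    simp only [Function.comp_apply, mem_ofPred_eq, hT y hy v hv, hT w hw v hv, norm_mul]
    gcongr
  have := strictConvexSpace_complexToReal
  have heq : T z v = T w v := Complex.eqOn_of_isPreconnected_of_isMaxOn_norm
    (convex_ball (0 : ℂ) 1).isPreconnected isOpen_ball
    (hTd.clm_apply (differentiableOn_const v)) (mem_ball_zero_iff.2 hw) hTmax
    (mem_ball_zero_iff.2 hz)
  rw [hT z hz v hv, hT w hw v hv] at heq
  exact mul_left_cancel₀ hv heq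

theorem eqOn_const_of_isMaxOn (hf : IsRegularOnBall f) {c : ℍ[ℝ]} (hc : c ∈ ball 0 1)
    (hmax : IsMaxOn (norm ∘ f) (ball 0 1) c) : EqOn f (fun _ ↦ f c) (ball 0 1) := by
  -- All slices pass through `0`, so the maximum at `c` propagates to `0` and from there everywhere.
  have hzero : f 0 = f c := by
    obtain ⟨w, v, hv, rfl⟩ := exists_inv_mul_coeComplex_mul_eq c
    rw [mem_ball_zero_iff, norm_inv_mul_coeComplex_mul w hv] at hc
    simpa using hf.apply_conj_eq_of_isMaxOn hv (z := 0) hc (by simp) hmax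
  intro q hq
  obtain ⟨z, v, hv, rfl⟩ := exists_inv_mul_coeComplex_mul_eq q
  rw [mem_ball_zero_iff, norm_inv_mul_coeComplex_mul z hv] at hq
  have hmax0 : IsMaxOn (norm ∘ f) (ball 0 1) (v⁻¹ * (0 : ℂ) * v) := by
    simpa [IsMaxOn, IsMaxFilter, hzero] using hmax
  simpa [hzero] using hf.apply_conj_eq_of_isMaxOn hv (by simp) hq hmax0

end IsRegularOnBall

end LeftComplexStructure

section PowerFactor

theorem hasSum_zero_pow_mul {R : Type*} [Semiring R] [TopologicalSpace R] (a : ℕ → R) :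
    HasSum (fun n ↦ 0 ^ n * a n) (a 0) := by
  simpa using hasSum_single (f := fun n ↦ 0 ^ n * a n) 0 fun n hn ↦ by simp [hn]

theorem summable_pow_mul_add {K : Type*} [DivisionRing K] [TopologicalSpace K]
    [IsTopologicalRing K] {a : ℕ → K} {q : K} (h : Summable fun n ↦ q ^ n * a n) (m : ℕ) :
    Summable fun n ↦ q ^ n * a (n + m) := by
  obtain rfl | hq := eq_or_ne q 0
  · exact (hasSum_zero_pow_mul fun n ↦ a (n + m)).summable
  · refine (((summable_nat_add_iff m).2 h).mul_left (q ^ m)⁻¹).congr fun n ↦ ?_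
    rw [add_comm n m, pow_add, mul_assoc, inv_mul_cancel_left₀ (pow_ne_zero m hq)]

theorem hasSum_pow_mul_of_forall_lt_eq_zero {R : Type*} [Ring R] [TopologicalSpace R]
    [IsTopologicalRing R] {a : ℕ → R} {m : ℕ} (ha : ∀ n < m, a n = 0) {q s : R}
    (hs : HasSum (fun n ↦ q ^ n * a (n + m)) s) : HasSum (fun n ↦ q ^ n * a n) (q ^ m * s) := by
  rw [← hasSum_nat_add_iff' m, Finset.sum_eq_zero fun n hn ↦ by
    rw [ha n (Finset.mem_range.1 hn), mul_zero], sub_zero]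
  simpa only [add_comm _ m, pow_add, mul_assoc] using hs.mul_left (q ^ m)

theorem IsRegularOnBall.exists_eq_pow_mul {f : ℍ[ℝ] → ℍ[ℝ]} (hf : IsRegularOnBall f)
    (hne : ∃ q ∈ ball 0 1, f q ≠ 0) :
    ∃ (m : ℕ) (g : ℍ[ℝ] → ℍ[ℝ]), IsRegularOnBall g ∧ g 0 ≠ 0 ∧
      ∀ q ∈ ball 0 1, f q = q ^ m * g q := by
  classical
  obtain ⟨a, ha⟩ := hf
  have hcoeff : ∃ n, a n ≠ 0 := by
    by_contra! hzero
    obtain ⟨q, hq, hfq⟩ := hne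
    exact hfq ((ha q hq).unique (by simpa only [hzero, mul_zero] using hasSum_zero))
  set m := Nat.find hcoeff
  set g : ℍ[ℝ] → ℍ[ℝ] := fun q ↦ ∑' n, q ^ n * a (n + m)
  have hg : ∀ q ∈ ball (0 : ℍ[ℝ]) 1, HasSum (fun n ↦ q ^ n * a (n + m)) (g q) := fun q hq ↦
    (summable_pow_mul_add (ha q hq).summable m).hasSum
  refine ⟨m, g, ⟨_, hg⟩, ?_, fun q hq ↦ ?_⟩
  · rw [(hg 0 (by simp)).unique (hasSum_zero_pow_mul fun n ↦ a (n + m)), zero_add]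
    exact Nat.find_spec hcoeff
  · exact (ha q hq).unique <| hasSum_pow_mul_of_forall_lt_eq_zero
      (fun n hn ↦ not_not.1 (Nat.find_min hcoeff hn)) (hg q hq)

end PowerFactor

namespace IsRegularOnBall

variable {f g : ℍ[ℝ] → ℍ[ℝ]}

theorem eventually_norm_le_of_injOn (hf : IsRegularOnBall f) (hinj : InjOn f (ball 0 1))
    {q₀ : ℍ[ℝ]} {r : ℝ} (hq₀ : ‖q₀‖ < r) (hr1 : r < 1) :
    ∀ᶠ w in 𝓝 (f q₀), ∀ q ∈ ball 0 1, f q = w → ‖q‖ ≤ r := by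
  have hr0 : 0 < r := (norm_nonneg q₀).trans_lt hq₀
  have hsub : sphere (0 : ℍ[ℝ]) r ⊆ ball 0 1 :=
    sphere_subset_closedBall.trans (closedBall_subset_ball hr1)
  obtain ⟨p, hp, hmin⟩ := (isCompact_sphere (0 : ℍ[ℝ]) r).exists_isMinOn
    (NormedSpace.sphere_nonempty.2 hr0.le)
    ((hf.continuousOn.mono hsub).sub (continuousOn_const (c := f q₀))).norm
  have hpos : 0 < ‖f p - f q₀‖ := by
    rw [norm_pos_iff, sub_ne_zero, hinj.ne_iff (hsub hp) (mem_ball_zero_iff.2 (hq₀.trans hr1))]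
    rintro rfl
    exact hq₀.ne (mem_sphere_zero_iff_norm.1 hp)
  filter_upwards [ball_mem_nhds (f q₀) (half_pos hpos)] with w hw q hq hqw
  by_contra! hrq
  have hne : ∀ x, ‖x‖ ≤ r → f x - w ≠ 0 := fun x hx h0 ↦ by
    rw [← hqw, sub_eq_zero] at h0
    rw [hinj (mem_ball_zero_iff.2 (hx.trans_lt hr1)) hq h0] at hx
    exact hx.not_gt hrq
  have hsphere : ∀ x, ‖x‖ = r → ‖f p - f q₀‖ / 2 ≤ ‖f x - w‖ := fun x hx ↦ by
    have hpx : ‖f p - f q₀‖ ≤ ‖f x - f q₀‖ := hmin (mem_sphere_zero_iff_norm.2 hx)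
    have htri := norm_sub_le_norm_sub_add_norm_sub (f x) w (f q₀)
    rw [mem_ball_iff_norm] at hw
    linarith
  have hle := (hf.sub_const w).le_norm_of_forall_norm_eq hr1 hne hsphere hq₀.le
  rw [mem_ball_iff_norm'] at hw
  exact hle.not_gt hw

theorem exists_lt_one_forall_norm_le (hf : IsRegularOnBall f) (hinj : InjOn f (ball 0 1))
    {K : Set ℍ[ℝ]} (hK : IsCompact K) (hsub : K ⊆ f '' ball 0 1) :
    ∃ ρ < 1, ∀ q ∈ ball 0 1, f q ∈ K → ‖q‖ ≤ ρ := by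
  refine hK.induction_on (p := fun s ↦ ∃ ρ < 1, ∀ q ∈ ball 0 1, f q ∈ s → ‖q‖ ≤ ρ)
    ⟨0, one_pos, fun _ _ h ↦ h.elim⟩
    (fun s t hst ⟨ρ, hρ, h⟩ ↦ ⟨ρ, hρ, fun q hq hs ↦ h q hq (hst hs)⟩)
    (fun s t ⟨ρ, hρ, hs⟩ ⟨σ, hσ, ht⟩ ↦ ⟨max ρ σ, max_lt hρ hσ, fun q hq h ↦ le_max_iff.2 ?_⟩)
    fun w hw ↦ ?_
  · exact h.imp (hs q hq) (ht q hq)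
  · obtain ⟨q₀, hq₀, rfl⟩ := hsub hw
    obtain ⟨r, hr, hr1⟩ := exists_between (mem_ball_zero_iff.1 hq₀)
    exact ⟨_, mem_nhdsWithin_of_mem_nhds (hf.eventually_norm_le_of_injOn hinj hr hr1),
      r, hr1, fun q hq h ↦ h q hq rfl⟩

theorem norm_le_of_forall_norm_pow_mul_le (hg : IsRegularOnBall g) {m : ℕ} {C : ℝ}
    (hle : ∀ q ∈ ball 0 1, ‖q ^ m * g q‖ ≤ C) {q : ℍ[ℝ]} (hq : q ∈ ball 0 1) : ‖g q‖ ≤ C := by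
  rw [mem_ball_zero_iff] at hq
  have hlim : Tendsto (fun r : ℝ ↦ C / r ^ m) (𝓝[<] 1) (𝓝 C) := by
    have hcont : ContinuousAt (fun r : ℝ ↦ C / r ^ m) 1 := by fun_prop (disch := simp)
    simpa using hcont.tendsto.mono_left nhdsWithin_le_nhds
  refine ge_of_tendsto hlim ?_
  filter_upwards [Ioo_mem_nhdsLT hq] with r ⟨hqr, hr1⟩
  have hr0 : 0 < r := (norm_nonneg q).trans_lt hqr
  refine hg.norm_le_of_forall_norm_eq hr1 (fun p hp ↦ ?_) hqr.le
  rw [le_div_iff₀' (by positivity), ← hp, ← norm_pow, ← norm_mul]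
  exact hle p (mem_ball_zero_iff.2 (hp.trans_lt hr1))

theorem le_norm_of_forall_lt (hg : IsRegularOnBall g) (hne : ∀ q ∈ ball 0 1, g q ≠ 0) {L : ℝ}
    (hbdry : ∀ c < L, ∃ ρ < 1, ∀ q ∈ ball 0 1, ‖g q‖ ≤ c → ‖q‖ ≤ ρ)
    {q : ℍ[ℝ]} (hq : q ∈ ball 0 1) : L ≤ ‖g q‖ := by
  rw [mem_ball_zero_iff] at hq
  refine le_of_forall_lt_imp_le_of_dense fun c hc ↦ ?_
  obtain ⟨ρ, hρ1, hρ⟩ := hbdry c hc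
  obtain ⟨r, hr, hr1⟩ := exists_between (max_lt hρ1 hq)
  obtain ⟨hρr, hqr⟩ := max_lt_iff.1 hr
  refine hg.le_norm_of_forall_norm_eq hr1
    (fun p hp ↦ hne p (mem_ball_zero_iff.2 (hp.trans_lt hr1))) (fun p hp ↦ ?_) hqr.le
  by_contra! hpc
  exact hρr.not_ge (hp ▸ hρ p (mem_ball_zero_iff.2 (hp.trans_lt hr1)) hpc.le)

theorem exists_eq_pow_mul_const (hf : IsRegularOnBall f) (hmaps : MapsTo f (ball 0 1) (ball 0 1))
    (hproper : ∀ c < 1, ∃ ρ < 1, ∀ q ∈ ball 0 1, ‖f q‖ ≤ c → ‖q‖ ≤ ρ)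
    (hzero : ∀ q ∈ ball 0 1, f q = 0 → q = 0) :
    ∃ (m : ℕ) (u : ℍ[ℝ]), ‖u‖ = 1 ∧ ∀ q ∈ ball 0 1, f q = q ^ m * u := by
  have hne : ∃ q ∈ ball 0 1, f q ≠ 0 := by
    obtain ⟨q, hq0, hq1⟩ := NormedField.exists_norm_lt_one ℝ
    have hball : (q : ℍ[ℝ]) ∈ ball 0 1 := by simpa
    exact ⟨q, hball, fun h ↦ norm_pos_iff.1 hq0 (Quaternion.coe_injective (hzero q hball h))⟩
  obtain ⟨m, g, hg, hg0, hfg⟩ := hf.exists_eq_pow_mul hne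
  have hgne : ∀ q ∈ ball 0 1, g q ≠ 0 := fun q hq hgq ↦ by
    rw [hzero q hq (by rw [hfg q hq, hgq, mul_zero])] at hgq
    exact hg0 hgq
  have hupper : ∀ q ∈ ball 0 1, ‖g q‖ ≤ 1 := fun q hq ↦
    hg.norm_le_of_forall_norm_pow_mul_le (m := m)
      (fun p hp ↦ hfg p hp ▸ (mem_ball_zero_iff.1 (hmaps hp)).le) hq
  have hfle : ∀ q ∈ ball 0 1, ‖f q‖ ≤ ‖g q‖ := fun q hq ↦ by
    rw [hfg q hq, norm_mul, norm_pow]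
    exact mul_le_of_le_one_left (norm_nonneg _)
      (pow_le_one₀ (norm_nonneg q) (mem_ball_zero_iff.1 hq).le)
  have hlower : 1 ≤ ‖g 0‖ := hg.le_norm_of_forall_lt hgne (fun c hc ↦ by
    obtain ⟨ρ, hρ1, hρ⟩ := hproper c hc
    exact ⟨ρ, hρ1, fun q hq hgc ↦ hρ q hq ((hfle q hq).trans hgc)⟩) (mem_ball_self one_pos)
  have hconst := hg.eqOn_const_of_isMaxOn (mem_ball_self one_pos)
    fun q hq ↦ (hupper q hq).trans hlower
  exact ⟨m, g 0, (hupper 0 (mem_ball_self one_pos)).antisymm hlower,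
    fun q hq ↦ by rw [hfg q hq, hconst hq]⟩

end IsRegularOnBall

theorem eq_one_of_injOn_pow {m : ℕ} (h : InjOn (fun q : ℍ[ℝ] ↦ q ^ m) (ball 0 1)) : m = 1 := by
  have hball (z : ℂ) (hz : ‖z‖ = 1) : ((z / 2 : ℂ) : ℍ[ℝ]) ∈ ball 0 1 := by
    rw [mem_ball_zero_iff, norm_coeComplex, norm_div, hz]
    norm_num
  have hroot (z : ℂ) (hz : ‖z‖ = 1) (hzm : z ^ m = 1) : z = 1 := by
    have hpow : ((z / 2 : ℂ) : ℍ[ℝ]) ^ m = ((1 / 2 : ℂ) : ℍ[ℝ]) ^ m := by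
      simp only [← Quaternion.coe_ofComplex, ← map_pow, div_pow, hzm, one_pow]
    have heq := Quaternion.ofComplex.toRingHom.injective (h (hball z hz) (hball 1 norm_one) hpow)
    exact (div_left_inj' two_ne_zero).1 heq
  obtain rfl | hm := eq_or_ne m 0
  · have hneg : (-1 : ℂ) = 1 := hroot (-1) (by simp) (pow_zero _)
    norm_num at hneg
  · have hζ := Complex.isPrimitiveRoot_exp m hm
    exact hζ.eq_orderOf.trans (orderOf_eq_one_iff.2 (hroot _ (hζ.norm'_eq_one hm) hζ.pow_eq_one))

/-- A regular bijection of the unit ball `𝔹` onto itself fixing `0` is a rotation: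
`f(q) = qu` for some `u` with `|u| = 1`. -/
theorem regular_bijection_fixing_zero (f : ℍ[ℝ] → ℍ[ℝ]) (a : ℕ → ℍ[ℝ])
    (hf : ∀ q ∈ Metric.ball (0 : ℍ[ℝ]) 1, HasSum (fun n : ℕ => q ^ n * a n) (f q))
    (hbij : Set.BijOn f (Metric.ball 0 1) (Metric.ball 0 1))
    (h0 : f 0 = 0) :
    ∃ u : ℍ[ℝ], ‖u‖ = 1 ∧ ∀ q ∈ Metric.ball (0 : ℍ[ℝ]) 1, f q = q * u := by
  have hreg : IsRegularOnBall f := ⟨a, hf⟩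
  have hproper : ∀ c < 1, ∃ ρ < 1, ∀ q ∈ ball 0 1, ‖f q‖ ≤ c → ‖q‖ ≤ ρ := fun c hc ↦ by
    simpa only [mem_closedBall_zero_iff] using hreg.exists_lt_one_forall_norm_le hbij.injOn
      (isCompact_closedBall 0 c) ((closedBall_subset_ball hc).trans hbij.surjOn)
  have hzero : ∀ q ∈ ball 0 1, f q = 0 → q = 0 := fun q hq hfq ↦
    hbij.injOn hq (mem_ball_self one_pos) (hfq.trans h0.symm)
  obtain ⟨m, u, hu, hfu⟩ := hreg.exists_eq_pow_mul_const hbij.mapsTo hproper hzero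
  have hm : m = 1 := eq_one_of_injOn_pow fun p hp q hq hpq ↦
    hbij.injOn hp hq (by simp only [hfu p hp, hfu q hq, hpq])
  exact ⟨u, hu, fun q hq ↦ by rw [hfu q hq, hm, pow_one]⟩
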